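/- arXiv:1905.13111 — 2 statements merged into one kernel-verified Lean document; each statement's English description precedes it below -/
import Mathlib

section
/- Let N be a positive integer, H a complex normed space, and U : ZMod N → (H →L[ℂ] H) a representation of ℤ/N on H, i.e. U 0 = id and U (s + t) = U s ∘ U t for all s, t. For each E ∈ ZMod N let P_E := (1/N) • ∑_{t ∈ ZMod N} e(E·t/N) • U t. Then the family (P_E)_{E ∈ ZMod N} is a complete orthogonal family: ∑_{E ∈ ZMod N} P_E = id, and P_E ∘ P_F = 0 whenever E ≠ F. -/
/-!
The phase `planeWave N E t` is `ψ (E * t)` for the standard primitive additive character `ψ` of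
`ZMod N`, so both claims reduce to `∑ x, ψ (x * b) = N` if `b = 0` and `0` otherwise.
Completeness follows by exchanging the two sums: only `t = 0` survives, with value `U 0 = id`.
For orthogonality, reindexing the sum shows `U s ∘ P_F = ψ (-F * s) • P_F`, so that
`P_E ∘ P_F = (1 / N) (∑ s, ψ (s * (E - F))) • P_F`, which vanishes for `E ≠ F`.
-/

/-- The plane-wave phase `e(E·t/N) = exp(2πi·E.val·t.val/N)`. -/
noncomputable def planeWave (N : ℕ) (E t : ZMod N) : ℂ :=
  Complex.exp (2 * Real.pi * Complex.I * ((E.val : ℂ) * (t.val : ℂ)) / N)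

open ZMod in
lemma planeWave_eq_stdAddChar (N : ℕ) [NeZero N] (E t : ZMod N) :
    planeWave N E t = stdAddChar (E * t) := by
  have h : E * t = (((E.val * t.val : ℕ) : ℤ) : ZMod N) := by simp
  rw [h, stdAddChar_coe, planeWave]
  push_cast
  rfl

open ZMod in
/-- The range of the (unnormalised) projector `P_F` consists of eigenvectors of every `U s`,
with eigenvalue `ψ (-F * s)`. -/
lemma comp_sum_stdAddChar_smul (N : ℕ) [NeZero N]
    {H : Type*} [NormedAddCommGroup H] [NormedSpace ℂ H] (U : ZMod N → (H →L[ℂ] H))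
    (hUadd : ∀ s t : ZMod N, U (s + t) = (U s).comp (U t)) (F s : ZMod N) :
    U s * ∑ t : ZMod N, stdAddChar (F * t) • U t =
      stdAddChar (-F * s) • ∑ t : ZMod N, stdAddChar (F * t) • U t := by
  rw [Finset.mul_sum, Finset.smul_sum, ← Equiv.sum_comp (Equiv.addLeft s)
    (fun t => stdAddChar (-F * s) • stdAddChar (F * t) • U t)]
  refine Finset.sum_congr rfl fun t _ => ?_
  rw [Equiv.coe_addLeft, hUadd, smul_smul, ← AddChar.map_add_eq_mul, mul_smul_comm]
  congr 2
  ring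

/-- The energy projectors of a representation of `ℤ/N` form a complete orthogonal family:
they sum to the identity and are mutually annihilating.  This is the paper's
projector-valued spectrum (coalgebra) associated to a quantum dynamical system. -/
theorem energy_projectors_complete_family (N : ℕ) [NeZero N]
    (H : Type*) [NormedAddCommGroup H] [NormedSpace ℂ H]
    (U : ZMod N → (H →L[ℂ] H))
    (hU0 : U 0 = ContinuousLinearMap.id ℂ H)
    (hUadd : ∀ s t : ZMod N, U (s + t) = (U s).comp (U t))
    (P : ZMod N → (H →L[ℂ] H))
    (hP : ∀ E : ZMod N, P E = (1 / (N : ℂ)) • ∑ t : ZMod N, planeWave N E t • U t) :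
    (∑ E : ZMod N, P E = ContinuousLinearMap.id ℂ H) ∧
    (∀ E F : ZMod N, E ≠ F → (P E).comp (P F) = 0) := by
  have hN : (N : ℂ) ≠ 0 := Nat.cast_ne_zero.mpr (NeZero.ne N)
  simp_rw [planeWave_eq_stdAddChar] at hP
  constructor
  · simp_rw [hP, ← Finset.smul_sum]
    rw [Finset.sum_comm]
    simp_rw [← Finset.sum_smul, AddChar.sum_mulShift _ (ZMod.isPrimitive_stdAddChar N)]
    simp [hU0, smul_smul, hN]
  · intro E F hEF
    change P E * P F = 0
    rw [hP E, hP F, smul_mul_smul_comm, Finset.sum_mul]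
    simp_rw [smul_mul_assoc, comp_sum_stdAddChar_smul N U hUadd F, smul_smul,
      ← AddChar.map_add_eq_mul]
    rw [← Finset.sum_smul]
    have h : ∑ s : ZMod N, ZMod.stdAddChar (E * s + -F * s) = (0 : ℂ) := by
      have := AddChar.sum_mulShift (E - F) (ZMod.isPrimitive_stdAddChar N)
      rw [if_neg (sub_ne_zero.mpr hEF), Nat.cast_zero] at this
      rw [← this]
      refine Finset.sum_congr rfl fun s _ => ?_
      congr 1
      ring
    rw [h, zero_smul, smul_zero]
end

section
/- Let ω be a positive hyperreal that is finite and not infinitesimal, i.e. there exist standard reals 0 < a ≤ b with a ≤ ω ≤ b, and let st ω denote its standard part. Let f : ℕ → ℤ and let x := Hyperreal.ofSeq (fun n ↦ (f n : ℝ)) be the corresponding hyperinteger. If x / ω is finite (|x / ω| ≤ r for some standard real r), then there exists an integer m : ℤ with st (x / ω) = m / st ω. Consequently, the set of standard parts of finite elements of (1/ω)·*ℤ equals the standard group (1/st ω)·ℤ = { m / st ω : m ∈ ℤ }. -/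
/-!
Since `ω` and `x / ω` are finite, so is `x`. A finite hyperinteger is a standard integer `m`
(`exists_int_of_abs_ofSeq_le`), because an ultrafilter concentrates a sequence with finitely many
values on one of them. As `ω` is not infinitesimal, `ω⁻¹` is finite, and multiplicativity of the
standard part on finite hyperreals gives `st (x / ω) = m / st ω`.
-/

/-- A hyperinteger bounded by a standard real is a standard integer: its representing sequence
takes only finitely many values on a set of the ultrafilter, hence is constant on such a set. -/
theorem exists_int_of_abs_ofSeq_le (f : ℕ → ℤ) (R : ℝ)
    (h : |Hyperreal.ofSeq (fun n => (f n : ℝ))| ≤ (R : ℝ*)) :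
    ∃ m : ℤ, Hyperreal.ofSeq (fun n => (f n : ℝ)) = ((m : ℝ) : ℝ*) := by
  obtain ⟨hlo, hhi⟩ := abs_le.mp h
  have hlo' : ∀ᶠ n in Filter.hyperfilter ℕ, -R ≤ (f n : ℝ) := Hyperreal.ofSeq_le_ofSeq.mp hlo
  have hhi' : ∀ᶠ n in Filter.hyperfilter ℕ, (f n : ℝ) ≤ R := Hyperreal.ofSeq_le_ofSeq.mp hhi
  have hmem : ∀ᶠ n in Filter.hyperfilter ℕ, ∃ m ∈ Set.Icc ⌈-R⌉ ⌊R⌋, f n = m := by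
    filter_upwards [hlo', hhi'] with n h₁ h₂
    exact ⟨f n, ⟨Int.ceil_le.mpr h₁, Int.le_floor.mpr h₂⟩, rfl⟩
  obtain ⟨m, -, hm⟩ :=
    (Ultrafilter.eventually_exists_mem_iff (Set.finite_Icc ⌈-R⌉ ⌊R⌋)).mp hmem
  refine ⟨m, Filter.Germ.coe_eq.mpr ?_⟩
  filter_upwards [hm] with n hn
  exact congrArg Int.cast hn

set_option linter.deprecated false in
/-- Discrete case of the identification of standard time-translation groups: if `ω` is a
finite, non-infinitesimal positive hyperreal and `x` is a hyperinteger with `x/ω` finite,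
then the standard part of `x/ω` lies in the standard group `(1/st ω)·ℤ`. -/
theorem finite_elements_of_discrete_nonstandard_group (ω : ℝ*)
    (a b : ℝ) (ha : 0 < a) (hab : a ≤ b)
    (haω : (a : ℝ*) ≤ ω) (hωb : ω ≤ (b : ℝ*))
    (f : ℕ → ℤ) (x : ℝ*) (hx : x = Hyperreal.ofSeq (fun n => (f n : ℝ)))
    (hfin : ∃ r : ℝ, |x / ω| ≤ (r : ℝ*)) :
    ∃ m : ℤ, Hyperreal.st (x / ω) = (m : ℝ) / Hyperreal.st ω := by
  obtain ⟨r, hr⟩ := hfin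
  have ha' : (0 : ℝ*) < a := Hyperreal.coe_pos.mpr ha
  have hω : 0 < ω := ha'.trans_le haω
  -- `x = (x / ω) * ω` is a product of finite hyperreals, hence itself finite.
  have hxR : |x| ≤ ((r * b : ℝ) : ℝ*) := by
    calc |x| = |x / ω| * ω := by rw [abs_div, abs_of_pos hω, div_mul_cancel₀ _ hω.ne']
      _ ≤ (r : ℝ*) * b := mul_le_mul hr hωb hω.le ((abs_nonneg _).trans hr)
      _ = ((r * b : ℝ) : ℝ*) := (Hyperreal.coe_mul r b).symm
  rw [hx] at hxR
  obtain ⟨m, hm⟩ := exists_int_of_abs_ofSeq_le f (r * b) hxR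
  refine ⟨m, ?_⟩
  -- Multiplicativity of `st` needs `ω⁻¹` finite, which follows from `0 < ω⁻¹ ≤ a⁻¹`.
  have hinv : ¬ Hyperreal.Infinite ω⁻¹ := by
    refine Hyperreal.not_infinite_iff_exist_lt_gt.mpr ⟨-1, a⁻¹ + 1, ?_, ?_⟩
    · have : (0 : ℝ*) < ω⁻¹ := inv_pos.mpr hω
      push_cast
      linarith
    · have : ω⁻¹ ≤ (a : ℝ*)⁻¹ := inv_anti₀ ha' haω
      push_cast
      linarith
  rw [hx, hm, div_eq_mul_inv, Hyperreal.st_mul (Hyperreal.not_infinite_real _) hinv,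
    Hyperreal.st_inv, Hyperreal.st_id_real, div_eq_mul_inv]
end
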